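/- For every integer w ≥ 4, ∑_{a+b+c=w, a≥2, b,c≥1} T(a,b,c) + ∑_{a+b=w−1, a≥2, b≥1} T(a,b,1) = (2/3)·T(2)·T(w−2). -/

import Mathlib

open Filter

/-- Depth-1 Euler sum `ζ(s; e) = ∑_{n ≥ 1} eⁿ / nˢ`,
defined as the limit of partial sums. `e = 1` gives `ζ(s)`, `e = -1` gives `ζ(s̄)`. -/
noncomputable def eulerSum1 (s : ℕ) (e : ℝ) : ℝ :=
  limUnder atTop (fun N : ℕ =>
    ∑ n ∈ Finset.Icc 1 N, e ^ n / (n : ℝ) ^ s)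

/-- Depth-2 Euler sum `ζ(s₁, s₂; e₁, e₂) = ∑_{n₁ > n₂ ≥ 1} e₁^{n₁} e₂^{n₂} / (n₁^{s₁} n₂^{s₂})`,
defined as the limit of iterated partial sums. A bar over an argument means the
corresponding sign is `-1`. -/
noncomputable def eulerSum2 (s₁ s₂ : ℕ) (e₁ e₂ : ℝ) : ℝ :=
  limUnder atTop (fun N : ℕ =>
    ∑ n₁ ∈ Finset.Icc 1 N, ∑ n₂ ∈ Finset.Ico 1 n₁,
      e₁ ^ n₁ * e₂ ^ n₂ / ((n₁ : ℝ) ^ s₁ * (n₂ : ℝ) ^ s₂))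

/-- Depth-3 Euler sum
`ζ(s₁, s₂, s₃; e₁, e₂, e₃) = ∑_{n₁ > n₂ > n₃ ≥ 1} e₁^{n₁} e₂^{n₂} e₃^{n₃} / (n₁^{s₁} n₂^{s₂} n₃^{s₃})`. -/
noncomputable def eulerSum3 (s₁ s₂ s₃ : ℕ) (e₁ e₂ e₃ : ℝ) : ℝ :=
  limUnder atTop (fun N : ℕ =>
    ∑ n₁ ∈ Finset.Icc 1 N, ∑ n₂ ∈ Finset.Ico 1 n₁, ∑ n₃ ∈ Finset.Ico 1 n₂,
      e₁ ^ n₁ * e₂ ^ n₂ * e₃ ^ n₃ / ((n₁ : ℝ) ^ s₁ * (n₂ : ℝ) ^ s₂ * (n₃ : ℝ) ^ s₃))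

/-- Depth-1 multiple T-value `T(s) = 2 ∑_{m odd, m ≥ 1} 1 / mˢ`. -/
noncomputable def tValue1 (s : ℕ) : ℝ :=
  limUnder atTop (fun N : ℕ =>
    ∑ m ∈ Finset.Icc 1 N, if m % 2 = 1 then 2 / (m : ℝ) ^ s else 0)

/-- Depth-2 multiple T-value
`T(s₁, s₂) = ∑_{m₁ > m₂ > 0, m₁ even, m₂ odd} 4 / (m₁^{s₁} m₂^{s₂})`. -/
noncomputable def tValue2 (s₁ s₂ : ℕ) : ℝ :=
  limUnder atTop (fun N : ℕ =>
    ∑ m₁ ∈ Finset.Icc 1 N, ∑ m₂ ∈ Finset.Ico 1 m₁,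
      if m₁ % 2 = 0 ∧ m₂ % 2 = 1 then 4 / ((m₁ : ℝ) ^ s₁ * (m₂ : ℝ) ^ s₂) else 0)

/-- Depth-3 multiple T-value
`T(s₁, s₂, s₃) = ∑_{m₁ > m₂ > m₃ > 0, m₁ odd, m₂ even, m₃ odd} 8 / (m₁^{s₁} m₂^{s₂} m₃^{s₃})`. -/
noncomputable def tValue3 (s₁ s₂ s₃ : ℕ) : ℝ :=
  limUnder atTop (fun N : ℕ =>
    ∑ m₁ ∈ Finset.Icc 1 N, ∑ m₂ ∈ Finset.Ico 1 m₁, ∑ m₃ ∈ Finset.Ico 1 m₂,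
      if m₁ % 2 = 1 ∧ m₂ % 2 = 0 ∧ m₃ % 2 = 1 then
        8 / ((m₁ : ℝ) ^ s₁ * (m₂ : ℝ) ^ s₂ * (m₃ : ℝ) ^ s₃) else 0)

/-- The odd harmonic number `∑_{p < n} 1 / (2p + 1)`. -/
noncomputable def oddHarmonic (n : ℕ) : ℝ := ∑ p ∈ Finset.range n, 1 / (2 * (p : ℝ) + 1)

lemma oddHarmonic_succ (n : ℕ) : oddHarmonic (n + 1) = oddHarmonic n + 1 / (2 * (n : ℝ) + 1) :=
  Finset.sum_range_succ _ _

@[simp] lemma oddHarmonic_zero : oddHarmonic 0 = 0 := by simp [oddHarmonic]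

lemma oddHarmonic_nonneg (n : ℕ) : 0 ≤ oddHarmonic n :=
  Finset.sum_nonneg fun _ _ => by positivity

lemma oddHarmonic_le_sqrt (n : ℕ) : oddHarmonic n ≤ √n := by
  induction n with
  | zero => simp
  | succ n ih =>
    rw [oddHarmonic_succ]
    have h1 : √((n : ℝ) + 1) ^ 2 = n + 1 := Real.sq_sqrt (by positivity)
    have h0 : √(n : ℝ) ^ 2 = n := Real.sq_sqrt (by positivity)
    have hle : √(n : ℝ) ≤ n := by
      rcases Nat.eq_zero_or_pos n with h | h
      · simp [h]
      · have : (1 : ℝ) ≤ n := by exact_mod_cast h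
        exact Real.sqrt_le_iff.mpr ⟨by positivity, by nlinarith⟩
    have hle1 : √((n : ℝ) + 1) ≤ n + 1 := 
      Real.sqrt_le_iff.mpr ⟨by positivity, by nlinarith [n.cast_nonneg (α := ℝ)]⟩
    have hpos : 0 < √((n : ℝ) + 1) + √n := by positivity
    have key : 1 / (2 * (n : ℝ) + 1) ≤ 1 / (√((n : ℝ) + 1) + √n) :=
      one_div_le_one_div_of_le hpos (by linarith)
    have e : 1 / (√((n : ℝ) + 1) + √n) = √((n : ℝ) + 1) - √n := by
      rw [div_eq_iff hpos.ne']; nlinarith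
    push_cast
    linarith

/-- A triangular double sum, with the smaller index taken outermost. -/
lemma sum_range_triangle (M : ℕ) (φ : ℕ → ℕ → ℝ) :
    ∑ s ∈ Finset.range M, ∑ t ∈ Finset.range (s + 1), φ s t =
      ∑ t ∈ Finset.range M, ∑ p ∈ Finset.range (M - t), φ (t + p) t := by
  rw [Finset.sum_comm' (t' := Finset.range M) (s' := fun t => Finset.Ico t M)]
  · exact Finset.sum_congr rfl fun t _ => by rw [Finset.sum_Ico_eq_sum_range]
  · intro x y
    simp only [Finset.mem_range, Finset.mem_Ico]
    omega

/-- Convolving a sequence with its partial sums sums its self-convolution. -/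
lemma sum_mul_partialSum (v : ℕ → ℝ) (r : ℕ) :
    ∑ p ∈ Finset.range r, v p * ∑ i ∈ Finset.range (r - p), v i =
      ∑ n ∈ Finset.range r, ∑ p ∈ Finset.range (n + 1), v p * v (n - p) := by
  rw [sum_range_triangle]
  refine Finset.sum_congr rfl fun t _ => ?_
  simp [Finset.mul_sum]

lemma sum_convolution_odd (n : ℕ) :
    ∑ p ∈ Finset.range (n + 1), 1 / (2 * (p : ℝ) + 1) * (1 / (2 * ((n - p : ℕ) : ℝ) + 1)) =
      oddHarmonic (n + 1) / (n + 1) := by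
  have h : ∀ p ∈ Finset.range (n + 1),
      1 / (2 * (p : ℝ) + 1) * (1 / (2 * ((n - p : ℕ) : ℝ) + 1)) =
        (1 / (2 * (p : ℝ) + 1) + 1 / (2 * ((n - p : ℕ) : ℝ) + 1)) / (2 * (n + 1)) := by
    intro p hp
    obtain ⟨d, rfl⟩ := Nat.exists_eq_add_of_le (Finset.mem_range_succ_iff.mp hp)
    rw [Nat.add_sub_cancel_left]
    push_cast
    field_simp
    ring
  rw [Finset.sum_congr rfl h, ← Finset.sum_div, Finset.sum_add_distrib]
  have hr := Finset.sum_range_reflect (fun p : ℕ => 1 / (2 * (p : ℝ) + 1)) (n + 1)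
  simp only [Nat.add_sub_cancel] at hr
  rw [hr, ← oddHarmonic]
  field_simp
  ring

lemma sum_convolution_one_div (n : ℕ) :
    ∑ p ∈ Finset.range (n + 1), 1 / ((p : ℝ) + 1) * (1 / (((n - p : ℕ) : ℝ) + 1)) =
      2 * (∑ p ∈ Finset.range (n + 1), 1 / ((p : ℝ) + 1)) / (n + 2) := by
  have h : ∀ p ∈ Finset.range (n + 1),
      1 / ((p : ℝ) + 1) * (1 / (((n - p : ℕ) : ℝ) + 1)) =
        (1 / ((p : ℝ) + 1) + 1 / (((n - p : ℕ) : ℝ) + 1)) / (n + 2) := by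
    intro p hp
    obtain ⟨d, rfl⟩ := Nat.exists_eq_add_of_le (Finset.mem_range_succ_iff.mp hp)
    rw [Nat.add_sub_cancel_left]
    push_cast
    field_simp
    ring
  rw [Finset.sum_congr rfl h, ← Finset.sum_div, Finset.sum_add_distrib]
  have hr := Finset.sum_range_reflect (fun p : ℕ => 1 / ((p : ℝ) + 1)) (n + 1)
  simp only [Nat.add_sub_cancel] at hr
  rw [hr]
  ring

lemma sum_convolution_alternating (n : ℕ) :
    ∑ p ∈ Finset.range (n + 1),
        (-1 : ℝ) ^ p / ((p : ℝ) + 1) * ((-1) ^ (n - p) / (((n - p : ℕ) : ℝ) + 1)) =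
      (-1) ^ n * (2 * (∑ p ∈ Finset.range (n + 1), 1 / ((p : ℝ) + 1)) / (n + 2)) := by
  rw [← sum_convolution_one_div, Finset.mul_sum]
  refine Finset.sum_congr rfl fun p hp => ?_
  have : (-1 : ℝ) ^ n = (-1) ^ p * (-1) ^ (n - p) := by
    rw [← pow_add, Nat.add_sub_cancel' (Finset.mem_range_succ_iff.mp hp)]
  rw [this]
  ring

/-- The partial sums `∑_{p < n} (-1)^p / (p + 1)` of the alternating harmonic series. -/
noncomputable def altHarmonic (n : ℕ) : ℝ := ∑ p ∈ Finset.range n, (-1) ^ p / ((p : ℝ) + 1)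

lemma altHarmonic_succ (n : ℕ) : altHarmonic (n + 1) = altHarmonic n + (-1) ^ n / ((n : ℝ) + 1) :=
  Finset.sum_range_succ _ _

lemma exists_altHarmonic_add_sub (d M : ℕ) : ∃ θ : ℝ, 0 ≤ θ ∧ θ ≤ 1 / ((M : ℝ) + 1) ∧
    altHarmonic (M + d) - altHarmonic M = (-1) ^ M * θ := by
  induction d generalizing M with
  | zero => exact ⟨0, le_rfl, by positivity, by simp⟩
  | succ d ih =>
    obtain ⟨θ, h0, h1, h⟩ := ih (M + 1)
    have hle : 1 / (((M + 1 : ℕ) : ℝ) + 1) ≤ 1 / ((M : ℝ) + 1) := by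
      push_cast
      exact one_div_le_one_div_of_le (by positivity) (by linarith)
    refine ⟨1 / ((M : ℝ) + 1) - θ, by linarith, by linarith, ?_⟩
    rw [show M + (d + 1) = M + 1 + d by ring]
    rw [altHarmonic_succ, pow_succ] at h
    linear_combination h

lemma abs_altHarmonic_sub_le {M N : ℕ} (h : M ≤ N) :
    |altHarmonic N - altHarmonic M| ≤ 1 / ((M : ℝ) + 1) := by
  obtain ⟨d, rfl⟩ := Nat.exists_eq_add_of_le h
  obtain ⟨θ, h0, h1, h⟩ := exists_altHarmonic_add_sub d M
  rw [h, abs_mul, abs_pow, abs_neg, abs_one, one_pow, one_mul, abs_of_nonneg h0]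
  exact h1

lemma tendsto_harmonic_div :
    Tendsto (fun n : ℕ => 2 * (∑ p ∈ Finset.range (n + 1), 1 / ((p : ℝ) + 1)) / (n + 2))
      atTop (nhds 0) := by
  have h := (tendsto_one_div_add_atTop_nhds_zero_nat (𝕜 := ℝ)).cesaro
  have h2 := ((tendsto_add_atTop_iff_nat 1).mpr h).const_mul 2
  rw [mul_zero] at h2
  refine squeeze_zero (fun n => by positivity) (fun n => ?_) h2
  push_cast
  rw [← div_eq_inv_mul, ← mul_div_assoc]
  gcongr
  linarith

lemma tendsto_altHarmonic_sq_sub :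
    Tendsto (fun N => altHarmonic N ^ 2 -
        ∑ p ∈ Finset.range N, (-1) ^ p / ((p : ℝ) + 1) * altHarmonic (N - p))
      atTop (nhds 0) := by
  rw [← tendsto_add_atTop_iff_nat 1]
  refine squeeze_zero_norm (fun n => ?_) tendsto_harmonic_div
  rw [← sum_convolution_one_div, pow_two]
  nth_rw 1 [altHarmonic]
  rw [Finset.sum_mul, ← Finset.sum_sub_distrib]
  refine (norm_sum_le _ _).trans (Finset.sum_le_sum fun p hp => ?_)
  have hp' := Finset.mem_range_succ_iff.mp hp
  rw [← mul_sub, norm_mul, Real.norm_eq_abs, Real.norm_eq_abs, abs_div, abs_pow, abs_neg, abs_one,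
    one_pow, abs_of_nonneg (by positivity : (0 : ℝ) ≤ (p : ℝ) + 1)]
  refine mul_le_mul_of_nonneg_left ?_ (by positivity)
  refine (abs_altHarmonic_sub_le (Nat.sub_le _ _)).trans ?_
  refine one_div_le_one_div_of_le (by positivity) ?_
  gcongr
  omega

lemma harmonic_add_altHarmonic (n : ℕ) :
    (∑ p ∈ Finset.range (2 * n + 1), 1 / ((p : ℝ) + 1)) + altHarmonic (2 * n + 1) =
      2 * oddHarmonic (n + 1) := by
  induction n with
  | zero => norm_num [altHarmonic, oddHarmonic]
  | succ n ih =>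
    rw [show 2 * (n + 1) + 1 = 2 * n + 1 + 1 + 1 by ring, Finset.sum_range_succ,
      Finset.sum_range_succ, altHarmonic_succ, altHarmonic_succ, oddHarmonic_succ (n + 1)]
    simp only [pow_succ, pow_mul]
    push_cast
    linear_combination ih

/-- The summand `O_q (1 / (2q) - 1 / (2q + 2r + 1))`, with `O_q` the odd harmonic numbers. -/
noncomputable def tailTerm (r q : ℕ) : ℝ :=
  oddHarmonic q * (1 / (2 * (q : ℝ)) - 1 / (2 * (q : ℝ) + 2 * r + 1))

lemma tailTerm_nonneg (r q : ℕ) : 0 ≤ tailTerm r q := by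
  rcases Nat.eq_zero_or_pos q with rfl | h
  · simp [tailTerm]
  · have : (0 : ℝ) < q := by exact_mod_cast h
    refine mul_nonneg (oddHarmonic_nonneg q) (sub_nonneg.mpr ?_)
    exact one_div_le_one_div_of_le (by positivity) (by linarith [r.cast_nonneg (α := ℝ)])

lemma sum_tailTerm_zero (n : ℕ) :
    4 * ∑ q ∈ Finset.range (n + 1), tailTerm 0 q =
      (∑ p ∈ Finset.range (2 * n), (-1) ^ p / ((p : ℝ) + 1) * altHarmonic (2 * n - p))
        - altHarmonic (2 * n + 1) ^ 2
        + ∑ p ∈ Finset.range (2 * n + 1), 1 / ((p : ℝ) + 1) ^ 2 := by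
  have hconv : ∀ N : ℕ,
      ∑ p ∈ Finset.range N, (-1) ^ p / ((p : ℝ) + 1) * altHarmonic (N - p) =
        ∑ n ∈ Finset.range N,
          (-1) ^ n * (2 * (∑ p ∈ Finset.range (n + 1), 1 / ((p : ℝ) + 1)) / (n + 2)) := by
    intro N
    simp only [altHarmonic, ← sum_convolution_alternating]
    exact sum_mul_partialSum (fun p : ℕ => (-1 : ℝ) ^ p / ((p : ℝ) + 1)) N
  rw [hconv]
  induction n with
  | zero => simp [tailTerm, altHarmonic]
  | succ n ih =>
    have h : oddHarmonic (n + 1) = ((∑ p ∈ Finset.range (2 * n + 1), 1 / ((p : ℝ) + 1))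
        + altHarmonic (2 * n + 1)) / 2 := by linarith [harmonic_add_altHarmonic n]
    rw [Finset.sum_range_succ, mul_add, ih, show 2 * (n + 1) = 2 * n + 1 + 1 by ring]
    simp only [Finset.sum_range_succ _ (2 * n + 1 + 1), Finset.sum_range_succ _ (2 * n + 1),
      Finset.sum_range_succ (fun n : ℕ => (-1 : ℝ) ^ n *
        (2 * (∑ p ∈ Finset.range (n + 1), 1 / ((p : ℝ) + 1)) / (n + 2))) (2 * n),
      altHarmonic_succ (2 * n + 1 + 1), altHarmonic_succ (2 * n + 1), tailTerm, h]
    generalize (∑ p ∈ Finset.range (2 * n + 1), 1 / ((p : ℝ) + 1)) = H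
    generalize altHarmonic (2 * n + 1) = A
    generalize ∑ m ∈ Finset.range (2 * n), (-1 : ℝ) ^ m *
      (2 * (∑ p ∈ Finset.range (m + 1), 1 / ((p : ℝ) + 1)) / (m + 2)) = C
    simp only [pow_succ, pow_mul]
    push_cast
    field_simp
    ring

lemma tendsto_two_mul_atTop : Tendsto (fun n : ℕ => 2 * n) atTop atTop :=
  tendsto_id.const_mul_atTop' (by norm_num)

lemma hasSum_tailTerm_zero : HasSum (tailTerm 0) ((∑' n : ℕ, 1 / ((n : ℝ) + 1) ^ 2) / 4) := by
  rw [hasSum_iff_tendsto_nat_of_nonneg (tailTerm_nonneg 0), ← tendsto_add_atTop_iff_nat 1]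
  have hs : Summable fun n : ℕ => 1 / ((n : ℝ) + 1) ^ 2 := by
    have := (summable_nat_add_iff 1).mpr (Real.summable_one_div_nat_pow.mpr (by norm_num : 1 < 2))
    simpa using this
  have hQ := hs.hasSum.tendsto_sum_nat.comp ((tendsto_add_atTop_nat 1).comp tendsto_two_mul_atTop)
  have hC := tendsto_altHarmonic_sq_sub.comp tendsto_two_mul_atTop
  have hA : Tendsto (fun N => altHarmonic (N + 1) ^ 2 - altHarmonic N ^ 2) atTop (nhds 0) := by
    refine squeeze_zero_norm (a := fun N : ℕ => 2 * (1 / ((N : ℝ) + 1))) (fun N => ?_) ?_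
    · have h0 : ∀ N, |altHarmonic N| ≤ 1 := fun N => by
        simpa [altHarmonic] using abs_altHarmonic_sub_le (Nat.zero_le N)
      rw [sq_sub_sq, norm_mul]
      refine mul_le_mul ?_ (abs_altHarmonic_sub_le (Nat.le_succ N)) (norm_nonneg _) (by norm_num)
      refine (norm_add_le _ _).trans ?_
      simp only [Real.norm_eq_abs]
      linarith [h0 N, h0 (N + 1)]
    · simpa using (tendsto_one_div_add_atTop_nhds_zero_nat (𝕜 := ℝ)).const_mul 2
  have h := ((hQ.sub hC).sub (hA.comp tendsto_two_mul_atTop)).div_const 4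
  simp only [sub_zero] at h
  refine h.congr fun n => ?_
  have := sum_tailTerm_zero n
  simp only [Function.comp_apply]
  linarith

/-- The correction `∑_{q ≤ r} O_q / (2q)`, with `O_q` the odd harmonic numbers. -/
noncomputable def oddHarmonicSum (r : ℕ) : ℝ :=
  ∑ q ∈ Finset.range r, oddHarmonic (q + 1) / (2 * (q + 1))

lemma oddHarmonicSum_succ (r : ℕ) :
    oddHarmonicSum (r + 1) = oddHarmonicSum r + oddHarmonic (r + 1) / (2 * (r + 1)) :=
  Finset.sum_range_succ _ _

lemma oddHarmonicSum_le_sqrt (r : ℕ) : oddHarmonicSum r ≤ √r := by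
  induction r with
  | zero => simp [oddHarmonicSum]
  | succ r ih =>
    rw [oddHarmonicSum_succ]
    have h1 : √((r : ℝ) + 1) ^ 2 = r + 1 := Real.sq_sqrt (by positivity)
    have h0 : √(r : ℝ) ^ 2 = r := Real.sq_sqrt (by positivity)
    have hO := oddHarmonic_le_sqrt (r + 1)
    push_cast at hO ⊢
    have hmono : √(r : ℝ) ≤ √((r : ℝ) + 1) := Real.sqrt_le_sqrt (by linarith)
    have hpos : 0 < √((r : ℝ) + 1) := by positivity
    have key : oddHarmonic (r + 1) / (2 * ((r : ℝ) + 1)) ≤ √((r : ℝ) + 1) - √r := by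
      rw [div_le_iff₀ (by positivity)]
      refine hO.trans ?_
      nlinarith [sq_nonneg (√((r : ℝ) + 1) - √r),
        mul_nonneg hpos.le (sq_nonneg (√((r : ℝ) + 1) - √r))]
    linarith

lemma sum_tailTerm_succ_sub (r n : ℕ) :
    ∑ q ∈ Finset.range n, (tailTerm (r + 1) q - tailTerm r q) =
      (oddHarmonic (r + 1) - (oddHarmonic (n + (r + 1)) - oddHarmonic n)) / (2 * (r + 1))
        - oddHarmonic n / (2 * n + 2 * r + 1) := by
  induction n with
  | zero => simp
  | succ n ih =>
    rw [Finset.sum_range_succ, ih, show n + 1 + (r + 1) = n + (r + 1) + 1 by ring,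
      oddHarmonic_succ n, oddHarmonic_succ (n + (r + 1)), tailTerm, tailTerm]
    generalize oddHarmonic n = a
    push_cast
    field_simp
    ring

lemma tendsto_oddHarmonic_add_sub (d : ℕ) :
    Tendsto (fun n => oddHarmonic (n + d) - oddHarmonic n) atTop (nhds 0) := by
  induction d with
  | zero => simp
  | succ d ih =>
    have h : Tendsto (fun n : ℕ => 1 / (2 * ((n + d : ℕ) : ℝ) + 1)) atTop (nhds 0) := by
      refine squeeze_zero (fun n => by positivity) (fun n => ?_)
        (tendsto_one_div_add_atTop_nhds_zero_nat (𝕜 := ℝ))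
      refine one_div_le_one_div_of_le (by positivity) ?_
      push_cast
      linarith [n.cast_nonneg (α := ℝ), d.cast_nonneg (α := ℝ)]
    have h2 := ih.add h
    rw [add_zero] at h2
    refine h2.congr fun n => ?_
    rw [← add_assoc, oddHarmonic_succ]
    ring

lemma tendsto_oddHarmonic_div (r : ℕ) :
    Tendsto (fun n : ℕ => oddHarmonic n / (2 * n + 2 * r + 1)) atTop (nhds 0) := by
  refine squeeze_zero (fun n => div_nonneg (oddHarmonic_nonneg n) (by positivity))
    (g := fun n : ℕ => (√(n : ℝ))⁻¹) (fun n => ?_) ?_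
  · rcases Nat.eq_zero_or_pos n with rfl | h
    · simp
    · have hn : (0 : ℝ) < n := by exact_mod_cast h
      rw [div_le_iff₀ (by positivity), ← div_eq_inv_mul, le_div_iff₀ (by positivity)]
      have h1 := mul_le_mul_of_nonneg_right (oddHarmonic_le_sqrt n) (Real.sqrt_nonneg n)
      rw [Real.mul_self_sqrt hn.le] at h1
      linarith [r.cast_nonneg (α := ℝ)]
  · exact tendsto_inv_atTop_zero.comp (Real.tendsto_sqrt_atTop.comp tendsto_natCast_atTop_atTop)

lemma tailTerm_le_succ (r q : ℕ) : tailTerm r q ≤ tailTerm (r + 1) q := by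
  refine mul_le_mul_of_nonneg_left ?_ (oddHarmonic_nonneg q)
  gcongr
  simp

lemma hasSum_tailTerm (r : ℕ) :
    HasSum (tailTerm r) ((∑' n : ℕ, 1 / ((n : ℝ) + 1) ^ 2) / 4 + oddHarmonicSum r) := by
  induction r with
  | zero => simpa [oddHarmonicSum] using hasSum_tailTerm_zero
  | succ r ih =>
    have h : HasSum (fun q => tailTerm (r + 1) q - tailTerm r q)
        (oddHarmonic (r + 1) / (2 * (r + 1))) := by
      rw [hasSum_iff_tendsto_nat_of_nonneg fun q => sub_nonneg.mpr (tailTerm_le_succ r q)]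
      simp only [sum_tailTerm_succ_sub]
      simpa using (((tendsto_oddHarmonic_add_sub (r + 1)).const_sub (oddHarmonic (r + 1))).div_const
        (2 * ((r : ℝ) + 1))).sub (tendsto_oddHarmonic_div r)
    rw [oddHarmonicSum_succ, ← add_assoc]
    simpa using ih.add h

lemma sum_Icc_eq_sum_range (f : ℕ → ℝ) (c n : ℕ) :
    ∑ a ∈ Finset.Icc c (c + n), f a = ∑ i ∈ Finset.range (n + 1), f (c + i) := by
  have : Finset.Icc c (c + n) = Finset.Ico c (c + (n + 1)) := by
    ext; simp only [Finset.mem_Icc, Finset.mem_Ico]; omega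
  rw [this, Finset.sum_Ico_eq_sum_range, Nat.add_sub_cancel_left]

lemma sum_pow_mul_pow {X Y : ℝ} (h : X ≠ Y) (n : ℕ) :
    ∑ j ∈ Finset.range (n + 1), X ^ j * Y ^ (n - j) = (X ^ (n + 1) - Y ^ (n + 1)) / (X - Y) := by
  rw [eq_div_iff (sub_ne_zero.mpr h)]
  exact (Commute.all X Y).geom_sum₂_mul (n + 1)

lemma sum_sum_pow_mul_pow {X Y Z : ℝ} (hXY : X ≠ Y) (hXZ : X ≠ Z) (hYZ : Y ≠ Z) (k : ℕ) :
    ∑ i ∈ Finset.range (k + 1), ∑ j ∈ Finset.range (k - i + 1), X ^ i * (Y ^ j * Z ^ (k - i - j)) =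
      (Y * ((X ^ (k + 1) - Y ^ (k + 1)) / (X - Y)) - Z * ((X ^ (k + 1) - Z ^ (k + 1)) / (X - Z)))
        / (Y - Z) := by
  rw [← sum_pow_mul_pow hXY, ← sum_pow_mul_pow hXZ, Finset.mul_sum, Finset.mul_sum,
    ← Finset.sum_sub_distrib, Finset.sum_div]
  refine Finset.sum_congr rfl fun i _ => ?_
  rw [← Finset.mul_sum, sum_pow_mul_pow hYZ]
  ring

/-- Partial fractions for the sum of all monomials of weight `k + 4`. -/
lemma sum_monomials_eq {x y z : ℝ} (hx : x ≠ 0) (hy : y ≠ 0) (hz : z ≠ 0)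
    (hxy : x ≠ y) (hxz : x ≠ z) (hyz : y ≠ z) (k : ℕ) :
    (∑ a ∈ Finset.Icc 2 (2 + k), ∑ b ∈ Finset.Icc 1 (k + 4 - a - 1),
        1 / (x ^ a * y ^ b * z ^ (k + 4 - a - b)))
      + ∑ a ∈ Finset.Icc 2 (2 + k), 1 / (x ^ a * y ^ (k + 4 - 1 - a) * z ^ 1) =
    1 / x ^ (k + 2) * (1 / (y - x) * (1 / (z - x) + 1 / z))
      + 1 / (x * (x - y) * y ^ (k + 1)) * (1 / (z - y) + 1 / z)
      + 1 / z ^ (k + 2) * (1 / (y - z) * (1 / (x - z) - 1 / x)) := by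
  have h1 : (∑ a ∈ Finset.Icc 2 (2 + k), ∑ b ∈ Finset.Icc 1 (k + 4 - a - 1),
        1 / (x ^ a * y ^ b * z ^ (k + 4 - a - b))) = x⁻¹ ^ 2 * y⁻¹ * z⁻¹ *
      ∑ i ∈ Finset.range (k + 1), ∑ j ∈ Finset.range (k - i + 1),
        x⁻¹ ^ i * (y⁻¹ ^ j * z⁻¹ ^ (k - i - j)) := by
    rw [sum_Icc_eq_sum_range, Finset.mul_sum]
    refine Finset.sum_congr rfl fun i hi => ?_
    have hi := Finset.mem_range_succ_iff.mp hi
    rw [show k + 4 - (2 + i) - 1 = 1 + (k - i) by omega, sum_Icc_eq_sum_range, Finset.mul_sum]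
    refine Finset.sum_congr rfl fun j hj => ?_
    have hj := Finset.mem_range_succ_iff.mp hj
    rw [show k + 4 - (2 + i) - (1 + j) = (k - i - j) + 1 by omega]
    simp only [inv_pow]
    field_simp
    ring
  have h2 : ∑ a ∈ Finset.Icc 2 (2 + k), 1 / (x ^ a * y ^ (k + 4 - 1 - a) * z ^ 1) =
      x⁻¹ ^ 2 * y⁻¹ * z⁻¹ * ∑ i ∈ Finset.range (k + 1), x⁻¹ ^ i * y⁻¹ ^ (k - i) := by
    rw [sum_Icc_eq_sum_range, Finset.mul_sum]
    refine Finset.sum_congr rfl fun i hi => ?_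
    have hi := Finset.mem_range_succ_iff.mp hi
    rw [show k + 4 - 1 - (2 + i) = (k - i) + 1 by omega]
    simp only [inv_pow]
    field_simp
    ring
  have hX : x⁻¹ ≠ y⁻¹ := fun h => hxy (inv_injective h)
  have hXZ : x⁻¹ ≠ z⁻¹ := fun h => hxz (inv_injective h)
  have hYZ : y⁻¹ ≠ z⁻¹ := fun h => hyz (inv_injective h)
  rw [h1, h2, sum_sum_pow_mul_pow hX hXZ hYZ, sum_pow_mul_pow hX]
  have a1 : x - y ≠ 0 := sub_ne_zero.mpr hxy
  have a2 : x - z ≠ 0 := sub_ne_zero.mpr hxz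
  have a3 : y - z ≠ 0 := sub_ne_zero.mpr hyz
  have e1 : x⁻¹ - y⁻¹ = -(x - y) / (x * y) := by field_simp; ring
  have e2 : x⁻¹ - z⁻¹ = -(x - z) / (x * z) := by field_simp; ring
  have e3 : y⁻¹ - z⁻¹ = -(y - z) / (y * z) := by field_simp; ring
  rw [e1, e2, e3, show y - x = -(x - y) by ring, show z - x = -(x - z) by ring,
    show z - y = -(y - z) by ring]
  simp only [show k + 2 = k + 1 + 1 by ring, pow_succ _ (k + 1), inv_pow]
  have p1 : x ^ (k + 1) ≠ 0 := pow_ne_zero _ hx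
  have p2 : y ^ (k + 1) ≠ 0 := pow_ne_zero _ hy
  have p3 : z ^ (k + 1) ≠ 0 := pow_ne_zero _ hz
  generalize x ^ (k + 1) = P at *
  generalize y ^ (k + 1) = Q at *
  generalize z ^ (k + 1) = R at *
  field_simp
  ring

lemma sum_even_row (s : ℕ) :
    ∑ t ∈ Finset.range (s + 1),
      (1 / ((2 * (t : ℝ) + 1) - (2 * (s : ℝ) + 2)) + 1 / (2 * (t : ℝ) + 1)) = 0 := by
  have hr := Finset.sum_range_reflect (fun p : ℕ => 1 / (2 * (p : ℝ) + 1)) (s + 1)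
  rw [Finset.sum_add_distrib, ← hr, ← Finset.sum_add_distrib]
  refine Finset.sum_eq_zero fun t ht => ?_
  obtain ⟨d, rfl⟩ := Nat.exists_eq_add_of_le (Finset.mem_range_succ_iff.mp ht)
  rw [Nat.add_sub_cancel, Nat.add_sub_cancel_left]
  push_cast
  rw [show (2 * (t : ℝ) + 1) - (2 * (t + d) + 2) = -(2 * d + 1) by ring, one_div_neg_eq_neg_one_div]
  ring

lemma sum_top_row (u : ℕ) :
    ∑ s ∈ Finset.range u, ∑ t ∈ Finset.range (s + 1),
      1 / ((2 * (s : ℝ) + 2) - (2 * (u : ℝ) + 1)) *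
        (1 / ((2 * (t : ℝ) + 1) - (2 * (u : ℝ) + 1)) + 1 / (2 * (t : ℝ) + 1)) =
      -oddHarmonicSum u := by
  rw [sum_range_triangle]
  have h1 : ∀ t ∈ Finset.range u, ∑ p ∈ Finset.range (u - t),
      1 / ((2 * ((t + p : ℕ) : ℝ) + 2) - (2 * (u : ℝ) + 1)) *
        (1 / ((2 * (t : ℝ) + 1) - (2 * (u : ℝ) + 1)) + 1 / (2 * (t : ℝ) + 1)) =
      oddHarmonic (u - t) / (2 * (u - t : ℕ)) - 1 / (2 * (t : ℝ) + 1) * oddHarmonic (u - t) := by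
    intro t ht
    obtain ⟨d, rfl⟩ := Nat.exists_eq_add_of_lt (Finset.mem_range.mp ht)
    rw [← Finset.sum_mul, show t + d + 1 - t = d + 1 by omega, oddHarmonic,
      ← Finset.sum_range_reflect (fun p : ℕ => 1 / (2 * (p : ℝ) + 1))]
    have : ∀ p ∈ Finset.range (d + 1),
        1 / ((2 * ((t + p : ℕ) : ℝ) + 2) - (2 * ((t + d + 1 : ℕ) : ℝ) + 1)) =
          -(1 / (2 * ((d + 1 - 1 - p : ℕ) : ℝ) + 1)) := by
      intro p hp
      obtain ⟨e, rfl⟩ := Nat.exists_eq_add_of_le (Finset.mem_range_succ_iff.mp hp)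
      rw [show p + e + 1 - 1 - p = e by omega, ← one_div_neg_eq_neg_one_div]
      push_cast
      ring
    rw [Finset.sum_congr rfl this, Finset.sum_neg_distrib]
    generalize ∑ p ∈ Finset.range (d + 1), 1 / (2 * ((d + 1 - 1 - p : ℕ) : ℝ) + 1) = S
    rw [show (2 * (t : ℝ) + 1) - (2 * ((t + d + 1 : ℕ) : ℝ) + 1) = -(2 * (d + 1 : ℕ)) by
      push_cast; ring, one_div_neg_eq_neg_one_div]
    ring
  rw [Finset.sum_congr rfl h1, Finset.sum_sub_distrib]
  have h2 : ∑ t ∈ Finset.range u, 1 / (2 * (t : ℝ) + 1) * oddHarmonic (u - t) =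
      2 * oddHarmonicSum u := by
    have := sum_mul_partialSum (fun p : ℕ => 1 / (2 * (p : ℝ) + 1)) u
    simp only [sum_convolution_odd] at this
    rw [oddHarmonicSum, Finset.mul_sum]
    refine this.trans ?_
    refine Finset.sum_congr rfl fun q _ => ?_
    field_simp
  have h3 : ∑ t ∈ Finset.range u, oddHarmonic (u - t) / (2 * (u - t : ℕ)) = oddHarmonicSum u := by
    rw [oddHarmonicSum, ← Finset.sum_range_reflect]
    refine Finset.sum_congr rfl fun t ht => ?_
    obtain ⟨d, rfl⟩ := Nat.exists_eq_add_of_lt (Finset.mem_range.mp ht)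
    rw [show t + d + 1 - (t + d + 1 - 1 - t) = t + 1 by omega]
    push_cast
    rfl
  rw [h2, h3]
  ring

lemma sum_bottom_row (u k : ℕ) :
    ∑ s ∈ Finset.range u, ∑ t ∈ Finset.range (s + 1),
      1 / (2 * (t : ℝ) + 1) ^ k * (1 / ((2 * (s : ℝ) + 2) - (2 * (t : ℝ) + 1)) *
        (1 / ((2 * (u : ℝ) + 1) - (2 * (t : ℝ) + 1)) - 1 / (2 * (u : ℝ) + 1))) =
      ∑ t ∈ Finset.range (u + 1), 1 / (2 * (t : ℝ) + 1) ^ k * tailTerm t (u - t) := by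
  rw [sum_range_triangle, Finset.sum_range_succ _ u, Nat.sub_self]
  simp only [tailTerm, oddHarmonic_zero, zero_mul, mul_zero, add_zero]
  refine Finset.sum_congr rfl fun t ht => ?_
  obtain ⟨d, rfl⟩ := Nat.exists_eq_add_of_lt (Finset.mem_range.mp ht)
  rw [show t + d + 1 - t = d + 1 by omega, oddHarmonic, ← Finset.mul_sum, ← Finset.sum_mul]
  congr 2
  · refine Finset.sum_congr rfl fun p _ => ?_
    push_cast
    ring
  · push_cast
    ring

/-- Partial sums of all T-value summands of weight `k + 4`, collected by the pole. -/
lemma sum_monomials_range (M k : ℕ) :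
    ∑ u ∈ Finset.range M, ∑ s ∈ Finset.range u, ∑ t ∈ Finset.range (s + 1),
      ((∑ a ∈ Finset.Icc 2 (2 + k), ∑ b ∈ Finset.Icc 1 (k + 4 - a - 1),
          1 / ((2 * (u : ℝ) + 1) ^ a * (2 * (s : ℝ) + 2) ^ b * (2 * (t : ℝ) + 1) ^ (k + 4 - a - b)))
        + ∑ a ∈ Finset.Icc 2 (2 + k),
          1 / ((2 * (u : ℝ) + 1) ^ a * (2 * (s : ℝ) + 2) ^ (k + 4 - 1 - a)
            * (2 * (t : ℝ) + 1) ^ 1)) =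
      ∑ r ∈ Finset.range M, 1 / (2 * (r : ℝ) + 1) ^ (k + 2) *
        ((∑ q ∈ Finset.range (M - r), tailTerm r q) - oddHarmonicSum r) := by
  have h : ∀ u ∈ Finset.range M, ∑ s ∈ Finset.range u, ∑ t ∈ Finset.range (s + 1),
      ((∑ a ∈ Finset.Icc 2 (2 + k), ∑ b ∈ Finset.Icc 1 (k + 4 - a - 1),
          1 / ((2 * (u : ℝ) + 1) ^ a * (2 * (s : ℝ) + 2) ^ b * (2 * (t : ℝ) + 1) ^ (k + 4 - a - b)))
        + ∑ a ∈ Finset.Icc 2 (2 + k),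
          1 / ((2 * (u : ℝ) + 1) ^ a * (2 * (s : ℝ) + 2) ^ (k + 4 - 1 - a)
            * (2 * (t : ℝ) + 1) ^ 1)) =
      (∑ t ∈ Finset.range (u + 1), 1 / (2 * (t : ℝ) + 1) ^ (k + 2) * tailTerm t (u - t))
        - 1 / (2 * (u : ℝ) + 1) ^ (k + 2) * oddHarmonicSum u := by
    intro u _
    rw [← sum_bottom_row, sub_eq_add_neg, ← mul_neg, ← sum_top_row, Finset.mul_sum,
      ← Finset.sum_add_distrib]
    refine Finset.sum_congr rfl fun s hs => ?_
    rw [Finset.mul_sum, ← Finset.sum_add_distrib]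
    have hs : (s : ℝ) + 1 ≤ u := by exact_mod_cast Finset.mem_range.mp hs
    have hmid : ∑ t ∈ Finset.range (s + 1),
        1 / ((2 * (u : ℝ) + 1) * ((2 * (u : ℝ) + 1) - (2 * (s : ℝ) + 2))
          * (2 * (s : ℝ) + 2) ^ (k + 1)) *
        (1 / ((2 * (t : ℝ) + 1) - (2 * (s : ℝ) + 2)) + 1 / (2 * (t : ℝ) + 1)) = 0 := by
      rw [← Finset.mul_sum, sum_even_row, mul_zero]
    refine Eq.trans ?_ (add_zero _)
    rw [← hmid, ← Finset.sum_add_distrib]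
    refine Finset.sum_congr rfl fun t ht => ?_
    have ht : (t : ℝ) ≤ s := by exact_mod_cast Finset.mem_range_succ_iff.mp ht
    rw [sum_monomials_eq (by positivity) (by positivity) (by positivity)
      (by intro h; linarith) (by intro h; linarith) (by intro h; linarith)]
    ring
  rw [Finset.sum_congr rfl h, Finset.sum_sub_distrib, sum_range_triangle]
  simp only [mul_sub, Finset.sum_sub_distrib, Finset.mul_sum, Nat.add_sub_cancel_left]

lemma sum_Ico_odd (f : ℕ → ℝ) (M : ℕ) :
    ∑ m ∈ Finset.Ico 1 (2 * M + 1), (if m % 2 = 1 then f m else 0) =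
      ∑ u ∈ Finset.range M, f (2 * u + 1) := by
  induction M with
  | zero => simp
  | succ M ih =>
    rw [show 2 * (M + 1) + 1 = 2 * M + 1 + 1 + 1 by ring, Finset.sum_Ico_succ_top (by omega),
      Finset.sum_Ico_succ_top (by omega), ih, Finset.sum_range_succ, if_pos (by omega),
      if_neg (by omega), add_zero]

lemma sum_Ico_odd_of_even (f : ℕ → ℝ) (s : ℕ) :
    ∑ m ∈ Finset.Ico 1 (2 * s + 2), (if m % 2 = 1 then f m else 0) =
      ∑ t ∈ Finset.range (s + 1), f (2 * t + 1) := by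
  rw [Finset.sum_Ico_succ_top (by omega), sum_Ico_odd, Finset.sum_range_succ, if_pos (by omega)]

lemma sum_Ico_even (f : ℕ → ℝ) (M : ℕ) :
    ∑ m ∈ Finset.Ico 1 (2 * M + 1), (if m % 2 = 0 then f m else 0) =
      ∑ s ∈ Finset.range M, f (2 * s + 2) := by
  induction M with
  | zero => simp
  | succ M ih =>
    rw [show 2 * (M + 1) + 1 = 2 * M + 1 + 1 + 1 by ring, Finset.sum_Ico_succ_top (by omega),
      Finset.sum_Ico_succ_top (by omega), ih, Finset.sum_range_succ, if_neg (by omega),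
      if_pos (by omega), add_zero]

lemma Icc_one_eq_Ico (N : ℕ) : Finset.Icc 1 N = Finset.Ico 1 (N + 1) := by
  ext; simp only [Finset.mem_Icc, Finset.mem_Ico]; omega

/-- The partial sums defining `tValue3`. -/
noncomputable def tPartial3 (a b c N : ℕ) : ℝ :=
  ∑ m₁ ∈ Finset.Icc 1 N, ∑ m₂ ∈ Finset.Ico 1 m₁, ∑ m₃ ∈ Finset.Ico 1 m₂,
    if m₁ % 2 = 1 ∧ m₂ % 2 = 0 ∧ m₃ % 2 = 1 then
      8 / ((m₁ : ℝ) ^ a * (m₂ : ℝ) ^ b * (m₃ : ℝ) ^ c) else 0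

lemma tPartial3_two_mul (a b c M : ℕ) : tPartial3 a b c (2 * M) =
    8 * ∑ u ∈ Finset.range M, ∑ s ∈ Finset.range u, ∑ t ∈ Finset.range (s + 1),
      1 / ((2 * (u : ℝ) + 1) ^ a * (2 * (s : ℝ) + 2) ^ b * (2 * (t : ℝ) + 1) ^ c) := by
  simp only [tPartial3, ite_and, Finset.sum_ite_irrel, Finset.sum_const_zero, Icc_one_eq_Ico,
    sum_Ico_odd, sum_Ico_even, sum_Ico_odd_of_even, Finset.mul_sum]
  push_cast
  simp only [mul_one_div]

lemma sum_Icc_one_monotone {g : ℕ → ℝ} (hg : ∀ m, 0 ≤ g m) :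
    Monotone fun N => ∑ m ∈ Finset.Icc 1 N, g m := fun _ _ h =>
  Finset.sum_le_sum_of_subset_of_nonneg (Finset.Icc_subset_Icc_right h) fun m _ _ => hg m

lemma tPartial3_monotone (a b c : ℕ) : Monotone (tPartial3 a b c) :=
  sum_Icc_one_monotone fun m₁ => Finset.sum_nonneg fun m₂ _ => Finset.sum_nonneg fun m₃ _ => by
    split_ifs <;> positivity

lemma tPartial3_nonneg (a b c N : ℕ) : 0 ≤ tPartial3 a b c N :=
  Finset.sum_nonneg fun m₁ _ => Finset.sum_nonneg fun m₂ _ => Finset.sum_nonneg fun m₃ _ => by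
    split_ifs <;> positivity

lemma tendsto_tPartial3 {a b c : ℕ} {B : ℝ} (h : ∀ N, tPartial3 a b c N ≤ B) :
    Tendsto (tPartial3 a b c) atTop (nhds (tValue3 a b c)) := by
  have hc := tendsto_atTop_ciSup (tPartial3_monotone a b c) ⟨B, by rintro _ ⟨N, rfl⟩; exact h N⟩
  rwa [show tValue3 a b c = ⨆ N, tPartial3 a b c N from hc.limUnder_eq]

lemma summable_one_div_odd_pow {s : ℕ} (hs : 2 ≤ s) :
    Summable fun n : ℕ => 1 / (2 * (n : ℝ) + 1) ^ s := by
  have h := (Real.summable_one_div_nat_pow.mpr (by omega : 1 < s)).comp_injective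
    (i := fun n : ℕ => 2 * n + 1) fun a b h => by simpa using h
  simpa [Function.comp_def] using h

lemma tValue1_eq {s : ℕ} (hs : 2 ≤ s) :
    tValue1 s = 2 * ∑' n : ℕ, 1 / (2 * (n : ℝ) + 1) ^ s := by
  refine Tendsto.limUnder_eq ?_
  rw [tendsto_iff_tendsto_subseq_of_monotone (φ := fun n : ℕ => 2 * n)
    (sum_Icc_one_monotone fun m => by split_ifs <;> positivity) tendsto_two_mul_atTop]
  refine ((summable_one_div_odd_pow hs).hasSum.tendsto_sum_nat.const_mul 2).congr fun M => ?_
  simp only [Function.comp_apply, Icc_one_eq_Ico, sum_Ico_odd, Finset.mul_sum]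
  push_cast
  simp only [mul_one_div]

lemma tsum_one_div_odd_sq :
    ∑' n : ℕ, 1 / (2 * (n : ℝ) + 1) ^ 2 = 3 / 4 * ∑' n : ℕ, 1 / ((n : ℝ) + 1) ^ 2 := by
  have hs : Summable fun n : ℕ => 1 / (n : ℝ) ^ 2 := Real.summable_one_div_nat_pow.mpr (by norm_num)
  have h1 := hs.tsum_eq_zero_add
  have h2 := tsum_even_add_odd (f := fun n : ℕ => 1 / (n : ℝ) ^ 2)
    (hs.comp_injective fun a b h => by simpa using h)
    (hs.comp_injective fun a b h => by simpa using h)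
  have h3 : ∑' n : ℕ, 1 / ((2 * n : ℕ) : ℝ) ^ 2 = 1 / 4 * ∑' n : ℕ, 1 / (n : ℝ) ^ 2 := by
    rw [← tsum_mul_left]
    refine tsum_congr fun n => ?_
    push_cast
    rw [mul_pow, one_div_mul_one_div]
    norm_num
  rw [h3] at h2
  push_cast at h1 h2
  norm_num at h1
  norm_num
  norm_num at h2
  linarith

lemma tendsto_sum_monomials (k : ℕ) :
    Tendsto (fun M => ∑ r ∈ Finset.range M, 1 / (2 * (r : ℝ) + 1) ^ (k + 2) *
        ((∑ q ∈ Finset.range (M - r), tailTerm r q) - oddHarmonicSum r)) atTop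
      (nhds ((∑' n : ℕ, 1 / (2 * (n : ℝ) + 1) ^ (k + 2)) *
        ((∑' n : ℕ, 1 / ((n : ℝ) + 1) ^ 2) / 4))) := by
  set κ : ℝ := (∑' n : ℕ, 1 / ((n : ℝ) + 1) ^ 2) / 4 with hκ
  have hκ0 : 0 ≤ κ := div_nonneg (tsum_nonneg fun n => by positivity) (by norm_num)
  rw [← tsum_mul_right]
  have hbound : Summable fun r : ℕ => 1 / ((r : ℝ) + 1) ^ 2 * (κ + √((r : ℝ) + 1)) := by
    have h1 := (summable_nat_add_iff 1).mpr (Real.summable_one_div_nat_pow.mpr (by norm_num : 1 < 2))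
    have h2 := (summable_nat_add_iff 1).mpr
      (Real.summable_one_div_nat_rpow.mpr (by norm_num : (1 : ℝ) < 3 / 2))
    refine ((h1.mul_right κ).add h2).congr fun r => ?_
    push_cast
    have hr : (0 : ℝ) < (r : ℝ) + 1 := by positivity
    rw [mul_add, Real.sqrt_eq_rpow, show (3 / 2 : ℝ) = (2 : ℕ) - 1 / 2 by norm_num,
      Real.rpow_sub hr, Real.rpow_natCast, one_div_div, div_eq_mul_one_div (_ ^ (1 / 2 : ℝ)),
      mul_comm (_ ^ (1 / 2 : ℝ))]
  have key := tendsto_tsum_of_dominated_convergence (𝓕 := atTop)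
    (f := fun (M r : ℕ) => if r < M then 1 / (2 * (r : ℝ) + 1) ^ (k + 2) *
        ((∑ q ∈ Finset.range (M - r), tailTerm r q) - oddHarmonicSum r) else 0)
    (g := fun r : ℕ => 1 / (2 * (r : ℝ) + 1) ^ (k + 2) * κ) hbound ?_ ?_
  · refine key.congr fun M => ?_
    rw [tsum_eq_sum (s := Finset.range M) fun r hr => if_neg (by simpa using hr)]
    exact Finset.sum_congr rfl fun r hr => if_pos (Finset.mem_range.mp hr)
  · intro r
    have h := ((hasSum_tailTerm r).tendsto_sum_nat.comp (tendsto_sub_atTop_nat r)).sub_const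
      (oddHarmonicSum r)
    rw [add_sub_cancel_right] at h
    refine (h.const_mul (1 / (2 * (r : ℝ) + 1) ^ (k + 2))).congr' ?_
    filter_upwards [eventually_gt_atTop r] with M hM
    rw [if_pos hM]
    rfl
  · refine Eventually.of_forall fun M r => ?_
    split_ifs with hr
    · rw [norm_mul, Real.norm_of_nonneg (by positivity : (0 : ℝ) ≤ 1 / (2 * (r : ℝ) + 1) ^ (k + 2))]
      refine mul_le_mul ?_ ?_ (norm_nonneg _) (by positivity)
      · refine one_div_le_one_div_of_le (by positivity) ?_
        calc ((r : ℝ) + 1) ^ (2 : ℕ) ≤ (2 * (r : ℝ) + 1) ^ 2 := by gcongr; linarith [r.cast_nonneg (α := ℝ)]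
          _ ≤ (2 * r + 1) ^ (k + 2) :=
            pow_le_pow_right₀ (by linarith [r.cast_nonneg (α := ℝ)]) (by omega)
      · have hle := sum_le_hasSum (Finset.range (M - r)) (fun q _ => tailTerm_nonneg r q)
          (hasSum_tailTerm r)
        have hnn : 0 ≤ ∑ q ∈ Finset.range (M - r), tailTerm r q :=
          Finset.sum_nonneg fun q _ => tailTerm_nonneg r q
        have hb := oddHarmonicSum_le_sqrt r
        have hmono : √(r : ℝ) ≤ √((r : ℝ) + 1) := Real.sqrt_le_sqrt (by linarith)
        rw [← hκ] at hle
        exact abs_le.mpr ⟨by linarith, by linarith [Real.sqrt_nonneg ((r : ℝ) + 1)]⟩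
    · rw [norm_zero]
      positivity

/-- The partial sums of all T-values on the left-hand side in weight `k + 4`. -/
noncomputable def tPartialSum (k N : ℕ) : ℝ :=
  (∑ a ∈ Finset.Icc 2 (2 + k), ∑ b ∈ Finset.Icc 1 (k + 4 - a - 1), tPartial3 a b (k + 4 - a - b) N)
    + ∑ a ∈ Finset.Icc 2 (2 + k), tPartial3 a (k + 4 - 1 - a) 1 N

lemma tPartialSum_monotone (k : ℕ) : Monotone (tPartialSum k) := fun _ _ h =>
  add_le_add
    (Finset.sum_le_sum fun _ _ => Finset.sum_le_sum fun _ _ => tPartial3_monotone _ _ _ h)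
    (Finset.sum_le_sum fun _ _ => tPartial3_monotone _ _ _ h)

lemma tPartialSum_two_mul (k M : ℕ) : tPartialSum k (2 * M) =
    8 * ∑ r ∈ Finset.range M, 1 / (2 * (r : ℝ) + 1) ^ (k + 2) *
      ((∑ q ∈ Finset.range (M - r), tailTerm r q) - oddHarmonicSum r) := by
  rw [← sum_monomials_range]
  simp only [tPartialSum, tPartial3_two_mul, ← Finset.mul_sum, ← mul_add]
  congr 1
  simp only [Finset.sum_add_distrib]
  congr 1
  · simp only [Finset.sum_comm (s := Finset.Icc 1 _), Finset.sum_comm (s := Finset.Icc 2 _)]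
  · simp only [Finset.sum_comm (s := Finset.Icc 2 _)]

lemma tendsto_tPartialSum (k : ℕ) :
    Tendsto (tPartialSum k) atTop (nhds (2 / 3 * tValue1 2 * tValue1 (k + 2))) := by
  rw [tendsto_iff_tendsto_subseq_of_monotone (tPartialSum_monotone k) tendsto_two_mul_atTop,
    tValue1_eq le_rfl, tValue1_eq (Nat.le_add_left 2 k), tsum_one_div_odd_sq]
  have h := (tendsto_sum_monomials k).const_mul 8
  convert h using 1
  · exact funext fun M => tPartialSum_two_mul k M
  · congr 1
    ring

/-- Kaneko–Tsumura Theorem 3.3: for `w ≥ 4`,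
`∑_{a+b+c=w, a≥2} T(a,b,c) + ∑_{a+b=w−1, a≥2} T(a,b,1) = (2/3) T(2) T(w−2)`. -/
theorem kaneko_tsumura_thm33 (w : ℕ) (hw : 4 ≤ w) :
    (∑ a ∈ Finset.Icc 2 (w - 2), ∑ b ∈ Finset.Icc 1 (w - a - 1),
        tValue3 a b (w - a - b))
      + ∑ a ∈ Finset.Icc 2 (w - 2), tValue3 a (w - 1 - a) 1
      = 2 / 3 * tValue1 2 * tValue1 (w - 2) := by
  obtain ⟨k, rfl⟩ := Nat.exists_eq_add_of_le' hw
  rw [show k + 4 - 2 = k + 2 by omega, add_comm k 2]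
  have hlim := tendsto_tPartialSum k
  rw [add_comm k 2] at hlim
  refine tendsto_nhds_unique (Tendsto.add ?_ ?_) hlim
  · refine tendsto_finsetSum _ fun a ha => tendsto_finsetSum _ fun b hb => tendsto_tPartial3
      (B := 2 / 3 * tValue1 2 * tValue1 (2 + k)) fun N => le_trans ?_
        ((tPartialSum_monotone k).ge_of_tendsto hlim N)
    refine le_add_of_le_of_nonneg ?_ (Finset.sum_nonneg fun _ _ => tPartial3_nonneg _ _ _ _)
    refine le_trans ?_ (Finset.single_le_sum (fun a _ =>
      Finset.sum_nonneg fun b _ => tPartial3_nonneg a b (k + 4 - a - b) N) ha)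
    exact Finset.single_le_sum (f := fun b => tPartial3 a b (k + 4 - a - b) N)
      (fun b _ => tPartial3_nonneg a b (k + 4 - a - b) N) hb
  · refine tendsto_finsetSum _ fun a ha => tendsto_tPartial3
      (B := 2 / 3 * tValue1 2 * tValue1 (2 + k)) fun N => le_trans ?_
        ((tPartialSum_monotone k).ge_of_tendsto hlim N)
    refine le_add_of_nonneg_of_le (Finset.sum_nonneg fun _ _ => Finset.sum_nonneg fun _ _ =>
      tPartial3_nonneg _ _ _ _) ?_
    exact Finset.single_le_sum (f := fun a => tPartial3 a (k + 4 - 1 - a) 1 N)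
      (fun a _ => tPartial3_nonneg a (k + 4 - 1 - a) 1 N) ha
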